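/- Let R be a noetherian normal integral domain with fraction field K and let A be a finite flat R-algebra whose generic fiber A^K = K ⊗_R A splits. Then the map Spec(R) → ℕ, p ↦ #Bl(A(p)), is lower semicontinuous, and Spec(R) = ⨿_{n∈ℕ} Bl_n(A) is a stratification into locally closed subsets where Bl_n(A) := {p : #Bl(A(p)) = n}. Moreover, the maximum of #Bl(A(p)) over p ∈ Spec(R) equals #Bl(A^K), and BlEx(A) := {p ∈ Spec(R) : #Bl(A(p)) < #Bl(A^K)} is a closed subset that is either empty or pure of codimension one in Spec(R) with finitely many irreducible components. -/

import Mathlib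

open TensorProduct

section BlockDefs
variable {B : Type*} [Ring B]
def IsBlockIdem (e : B) : Prop :=
  IsIdempotentElem e ∧ e ≠ 0 ∧ (∀ x : B, e * x = x * e) ∧
    ∀ f g : B, (∀ x : B, f * x = x * f) → (∀ x : B, g * x = x * g) →
      IsIdempotentElem f → IsIdempotentElem g → f * g = 0 → f + g = e → f = 0 ∨ g = 0
end BlockDefs

noncomputable def numBlocks (B : Type*) [Ring B] : ℕ := Nat.card {e : B // IsBlockIdem e}

/-- A finite-dimensional algebra over a field `K` is split if the endomorphisms of every
simple module are exactly the scalars `K`. -/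
def IsSplitAlgebra (K : Type u) (B : Type v) [Field K] [Ring B] [Algebra K B] : Prop :=
  ∀ (S : Type v) [AddCommGroup S] [Module B S], IsSimpleModule B S →
    ∀ f : S →ₗ[B] S, ∃ k : K, ∀ s : S, f s = algebraMap K B k • s

/-- The residue field `κ(p)` of `Spec R` at `p`. -/
noncomputable abbrev resFieldAt (R : Type*) [CommRing R] (p : PrimeSpectrum R) :=
  IsLocalRing.ResidueField (Localization.AtPrime p.asIdeal)

def IsIrredCompOf {X : Type*} [TopologicalSpace X] (C s : Set X) : Prop :=
  IsIrreducible C ∧ C ⊆ s ∧ ∀ C' : Set X, IsIrreducible C' → C' ⊆ s → C ⊆ C' → C' = C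

/-- A subset of `Spec R` which is pure of codimension one with finitely many irreducible
components (a reduced Weil divisor). -/
def IsReducedWeilDivisor {R : Type*} [CommRing R] (s : Set (PrimeSpectrum R)) : Prop :=
  {C | IsIrredCompOf C s}.Finite ∧
    ∀ C, IsIrredCompOf C s → ∃ q : PrimeSpectrum R, closure C = closure {q} ∧ Order.height q = 1


/-- central idempotents -/
def CI (B : Type*) [Ring B] : Set B := {e | IsIdempotentElem e ∧ ∀ x : B, e * x = x * e}

section part1
variable {B : Type*} [Ring B]

noncomputable def ciEquiv (B : Type*) [Ring B] :
    {e : Subring.center B // IsIdempotentElem e} ≃ CI B where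
  toFun e := ⟨e.1.1, congrArg Subtype.val e.2, fun x => (Subring.mem_center_iff.1 e.1.2 x).symm⟩
  invFun e := ⟨⟨e.1, Subring.mem_center_iff.2 fun x => (e.2.2 x).symm⟩, Subtype.ext e.2.1⟩
  left_inv _ := rfl
  right_inv _ := rfl

lemma block_iff_atom (e : {e : Subring.center B // IsIdempotentElem e}) :
    IsBlockIdem (e.1.1) ↔ IsAtom e := by
  have hle : ∀ a b : {e : Subring.center B // IsIdempotentElem e}, a ≤ b ↔ a.1.1 * b.1.1 = a.1.1 :=
    fun a b => ⟨fun h => congrArg Subtype.val (show a.1 * b.1 = a.1 from h), fun h => show a.1 * b.1 = a.1 from Subtype.ext h⟩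
  have hbot : ∀ a : {e : Subring.center B // IsIdempotentElem e}, a = ⊥ ↔ a.1.1 = 0 :=
    fun a => ⟨fun h => by rw [h]; rfl, fun h => Subtype.ext (Subtype.ext h)⟩
  constructor
  · rintro ⟨h1, h2, h3, h4⟩
    refine ⟨fun h => h2 ((hbot e).1 h), fun b hb => ?_⟩
    have hbe := (hle b e).1 hb.le
    have hbi : IsIdempotentElem b.1.1 := congrArg Subtype.val b.2
    have hbc : ∀ x, b.1.1 * x = x * b.1.1 := fun x => (Subring.mem_center_iff.1 b.1.2 x).symm
    have heb : e.1.1 * b.1.1 = b.1.1 := by rw [← hbc, hbe]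
    rcases h4 b.1.1 (e.1.1 - b.1.1) hbc (fun x => by rw [sub_mul, mul_sub, hbc, h3]) hbi
      (by
        unfold IsIdempotentElem
        rw [sub_mul, mul_sub, mul_sub, hbe, heb, hbi.eq, h1.eq]; abel)
      (by rw [mul_sub, hbe, hbi.eq, sub_self]) (by abel) with h | h
    · exact (hbot b).2 h
    · exact absurd (Subtype.ext (Subtype.ext (sub_eq_zero.1 h).symm)) hb.ne
  · intro h
    refine ⟨congrArg Subtype.val e.2, fun h' => h.1 ((hbot e).2 h'), fun x => (Subring.mem_center_iff.1 e.1.2 x).symm, ?_⟩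
    intro f g hf hg hfi hgi hfg hsum
    let f' : {e : Subring.center B // IsIdempotentElem e} := (ciEquiv B).symm ⟨f, hfi, hf⟩
    have hfe : f' ≤ e := (hle _ _).2 (by
      change f * e.1.1 = f
      rw [← hsum, mul_add, hfi.eq, hfg, add_zero])
    rcases h.le_iff.1 hfe with h1 | h1
    · exact Or.inl ((hbot _).1 h1)
    · right
      have : f = e.1.1 := congrArg (fun t => t.1.1) h1
      rw [this] at hsum
      simpa using hsum

lemma card_CI (h : Finite (CI B)) : Nat.card (CI B) = 2 ^ numBlocks B := by
  have hf : Finite {e : Subring.center B // IsIdempotentElem e} := Finite.of_equiv _ (ciEquiv B).symm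
  have := Fintype.ofFinite {e : Subring.center B // IsIdempotentElem e}
  letI := Fintype.toCompleteAtomicBooleanAlgebra {e : Subring.center B // IsIdempotentElem e}
  have e1 := (CompleteAtomicBooleanAlgebra.toSetOfIsAtom (α := {e : Subring.center B // IsIdempotentElem e})).toEquiv
  rw [← Nat.card_congr (ciEquiv B), Nat.card_congr e1]
  have : Nat.card (Set {a : {e : Subring.center B // IsIdempotentElem e} // IsAtom a}) =
     2 ^ Nat.card {a : {e : Subring.center B // IsIdempotentElem e} // IsAtom a} := by
    classical
    have : Fintype {a : {e : Subring.center B // IsIdempotentElem e} // IsAtom a} := Fintype.ofFinite _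
    rw [Nat.card_eq_fintype_card, Nat.card_eq_fintype_card, Fintype.card_set]
  rw [this]
  congr 1
  refine Nat.card_congr ⟨fun a => ⟨a.1.1.1, (block_iff_atom _).2 a.2⟩,
    fun a => ⟨(ciEquiv B).symm ⟨a.1, a.2.1, a.2.2.2.1⟩, (block_iff_atom _).1 a.2⟩, fun _ => rfl, fun _ => rfl⟩

lemma finite_CI (K : Type*) [Field K] [Algebra K B] [Module.Finite K B] : Finite (CI B) := by
  have : Module.Finite K (Subalgebra.center K B) := inferInstanceAs (Module.Finite K (Subalgebra.center K B).toSubmodule)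
  have : IsArtinianRing (Subalgebra.center K B) := IsArtinianRing.of_finite K _
  have h1 : Finite {e : Subalgebra.center K B // IsIdempotentElem e} :=
    Finite.of_equiv _ (PrimeSpectrum.isIdempotentElemEquivClopens).symm.toEquiv
  refine Finite.of_injective (β := {e : Subalgebra.center K B // IsIdempotentElem e})
    (fun e => ⟨⟨e.1, Subalgebra.mem_center_iff.2 fun x => (e.2.2 x).symm⟩, Subtype.ext e.2.1⟩) ?_
  intro a b h
  exact Subtype.ext (congrArg (fun t => t.1.1) h)

end part1

section part2
variable {L B : Type*} [CommRing L] [Ring B] [Algebra L B]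

/-- `I B` as a submodule -/
abbrev IB (B : Type*) [Ring B] [Algebra L B] (I : Ideal L) : Submodule L B := I • (⊤ : Submodule L B)

lemma IB_map {I J : Ideal L} {M : Type*} [AddCommGroup M] [Module L M] (f : B →ₗ[L] M) {N : Submodule L M}
    (h : ∀ x, f x ∈ N)
    {x : B} (hx : x ∈ IB B I) : f x ∈ I • N := by
  have : (IB B I).map f ≤ I • N := by
    rw [Submodule.map_smul'']
    refine Submodule.smul_mono le_rfl ?_
    rintro _ ⟨y, -, rfl⟩
    exact h y
  exact this ⟨x, hx, rfl⟩

lemma IB_mul_left {I : Ideal L} (a : B) {x : B} (hx : x ∈ IB B I) : a * x ∈ IB B I :=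
  IB_map (J := I) (LinearMap.mulLeft L a) (fun _ => Submodule.mem_top) hx

lemma IB_mul_right {I : Ideal L} (a : B) {x : B} (hx : x ∈ IB B I) : x * a ∈ IB B I :=
  IB_map (J := I) (LinearMap.mulRight L a) (fun _ => Submodule.mem_top) hx

lemma IB_mul {I J : Ideal L} {x y : B} (hx : x ∈ IB B I) (hy : y ∈ IB B J) : x * y ∈ IB B (I * J) := by
  have := IB_map (J := I) (LinearMap.mulRight L y) (N := IB B J) (fun z => IB_mul_left z hy) hx
  rwa [← Submodule.mul_smul] at this

lemma IB_mono {I J : Ideal L} (h : I ≤ J) : IB B I ≤ IB B J := Submodule.smul_mono h le_rfl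

lemma exists_idem_approx (I : Ideal L) (x : B) (hx : x * x - x ∈ IB B I) (n : ℕ) :
    ∃ y : B, y - x ∈ IB B I ∧ y * y - y ∈ IB B (I ^ (n+1)) := by
  induction n with
  | zero => exact ⟨x, by simp, by simpa using hx⟩
  | succ n ih =>
    obtain ⟨y, h1, h2⟩ := ih
    refine ⟨3 * (y * y) - 2 * (y * y * y), ?_, ?_⟩
    · have : 3 * (y * y) - 2 * (y * y * y) - x = (1 - 2 * y) * (y * y - y) + (y - x) := by
        noncomm_ring
      rw [this]
      refine add_mem (IB_mul_left _ (IB_mono ?_ h2)) h1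
      exact Ideal.pow_le_self (by omega)
    · have : (3 * (y * y) - 2 * (y * y * y)) * (3 * (y * y) - 2 * (y * y * y)) - (3 * (y * y) - 2 * (y * y * y))
        = (4 * (y * y) - 4 * y - 3) * ((y * y - y) * (y * y - y)) := by
        noncomm_ring
      rw [this]
      refine IB_mul_left _ (IB_mono ?_ (IB_mul h2 h2))
      rw [← pow_add]
      exact Ideal.pow_le_pow_right (by omega)

lemma corner_mem (I : Ideal L) (e f : B) (n : ℕ) (he : e * e - e ∈ IB B (I ^ n))
    (hf : f * f - f ∈ IB B (I ^ n)) (h : ∀ y, e * y * f ∈ IB B I) (k : ℕ) (hk : k ≤ n) (y : B) :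
    e * y * f ∈ IB B (I ^ k) := by
  induction k generalizing y with
  | zero => simp
  | succ k ih =>
    have h1 : e * (e * y * f) * f ∈ IB B (I ^ (k+1)) := by
      have := IB_map (J := I) ((LinearMap.mulRight L f).comp (LinearMap.mulLeft L e)) (N := IB B (I ^ k))
        (fun z => ih (by omega) z) (h y)
      rwa [← Submodule.mul_smul, ← pow_succ'] at this
    have h2 : e * y * f = e * (e * y * f) * f - ((e * e - e) * y * (f * f) + e * y * (f * f - f)) := by
      noncomm_ring
    rw [h2]
    have hle : IB B (I ^ n) ≤ IB B (I ^ (k+1)) := IB_mono (Ideal.pow_le_pow_right hk)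
    exact sub_mem h1 (add_mem (IB_mul_right _ (IB_mul_right _ (hle he))) (IB_mul_left _ (hle hf)))

lemma exists_central_idem_approx (I : Ideal L) (x : B) (hx : x * x - x ∈ IB B I)
    (hc : ∀ y, x * y - y * x ∈ IB B I) (n : ℕ) :
    ∃ e : B, e - x ∈ IB B I ∧ ∀ y, e * y - y * e ∈ IB B (I ^ (n+1)) := by
  obtain ⟨e, h1, h2⟩ := exists_idem_approx I x hx n
  refine ⟨e, h1, ?_⟩
  have h2' : e * e - e ∈ IB B I := IB_mono (Ideal.pow_le_self (by omega)) h2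
  have hc' : ∀ y, e * y - y * e ∈ IB B I := fun y => by
    have : e * y - y * e = (e - x) * y - y * (e - x) + (x * y - y * x) := by noncomm_ring
    rw [this]
    exact add_mem (sub_mem (IB_mul_right _ h1) (IB_mul_left _ h1)) (hc y)
  have h3 : (1 - e) * (1 - e) - (1 - e) ∈ IB B (I ^ (n+1)) := by
    have : (1 - e) * (1 - e) - (1 - e) = e * e - e := by noncomm_ring
    rwa [this]
  have k1 := corner_mem I e (1 - e) (n+1) h2 h3 (fun y => by
    have : e * y * (1 - e) = (e * y - y * e) * (1 - e) - y * (e * e - e) := by noncomm_ring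
    rw [this]
    exact sub_mem (IB_mul_right _ (hc' y)) (IB_mul_left _ h2')) (n+1) le_rfl
  have k2 := corner_mem I (1 - e) e (n+1) h3 h2 (fun y => by
    have : (1 - e) * y * e = - ((e * y - y * e) * e) - y * (e * e - e) := by noncomm_ring
    rw [this]
    exact sub_mem (neg_mem (IB_mul_right _ (hc' y))) (IB_mul_left _ h2')) (n+1) le_rfl
  intro y
  have : e * y - y * e = e * y * (1 - e) - (1 - e) * y * e := by noncomm_ring
  rw [this]
  exact sub_mem (k1 y) (k2 y)

lemma exists_central_lift [IsNoetherianRing L] [Module.Finite L B] (I : Ideal L) (x : B)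
    (hx : x * x - x ∈ IB B I) (hc : ∀ y, x * y - y * x ∈ IB B I) :
    ∃ z : B, z - x ∈ IB B I ∧ ∀ y, z * y = y * z := by
  obtain ⟨r, b, hb⟩ := Module.Finite.exists_fin (R := L) (M := B)
  let d : B →ₗ[L] (Fin r → B) :=
    LinearMap.pi fun i => LinearMap.mulRight L (b i) - LinearMap.mulLeft L (b i)
  have hd : ∀ a i, d a i = a * b i - b i * a := fun a i => rfl
  have hd0 : ∀ a, d a = 0 → ∀ y, a * y = y * a := by
    intro a ha y
    have : y ∈ Submodule.span L (Set.range b) := hb ▸ Submodule.mem_top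
    induction this using Submodule.span_induction with
    | mem y hy =>
      obtain ⟨i, rfl⟩ := hy
      exact sub_eq_zero.1 ((hd a i).symm.trans (congrFun ha i))
    | zero => simp
    | add u v _ _ hu hv => rw [mul_add, add_mul, hu, hv]
    | smul c u _ hu => rw [mul_smul_comm, smul_mul_assoc, hu]
  obtain ⟨k, hk⟩ := Ideal.exists_pow_inf_eq_pow_smul I (LinearMap.range d)
  obtain ⟨e, h1, h2⟩ := exists_central_idem_approx I x hx hc k
  have h3 : d e ∈ I ^ (k+1) • (⊤ : Submodule L (Fin r → B)) := by
    have : d e = ∑ i, LinearMap.single L (fun _ => B) i (d e i) := by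
      ext j
      simp [Finset.sum_apply, Pi.single_apply]
    rw [this]
    refine sum_mem fun i _ => IB_map (J := I) _ (fun _ => Submodule.mem_top) (h2 (b i))
  have h4 : d e ∈ I • LinearMap.range d := by
    have : d e ∈ I ^ (k+1) • (⊤ : Submodule L (Fin r → B)) ⊓ LinearMap.range d := ⟨h3, e, rfl⟩
    rw [hk (k+1) (by omega)] at this
    simp only [add_tsub_cancel_left, pow_one] at this
    exact Submodule.smul_mono le_rfl inf_le_right this
  rw [LinearMap.range_eq_map, ← Submodule.map_smul''] at h4
  obtain ⟨w, hw, hwe⟩ := h4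
  refine ⟨e - w, ?_, hd0 _ (by rw [map_sub, hwe, sub_self])⟩
  rw [sub_right_comm]
  exact sub_mem h1 hw

end part2

section part3
open Polynomial

lemma splits_of_split {K : Type u} {D : Type v} [Field K] [Ring D] [Algebra K D] [Module.Finite K D]
    (hs : IsSplitAlgebra K D) (z : D) (hz : ∀ x, z * x = x * z) : (minpoly K z).Splits := by
  rw [splits_iff_splits]
  right
  intro g hg hdvd
  obtain ⟨h, hh⟩ := hdvd
  have hm0 : minpoly K z ≠ 0 := minpoly.ne_zero (IsIntegral.of_finite K z)
  have hne : Ideal.span {aeval z g} ≠ ⊤ := by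
    intro htop
    have : (1 : D) ∈ Ideal.span {aeval z g} := htop ▸ Submodule.mem_top
    obtain ⟨d, hd⟩ := Ideal.mem_span_singleton'.1 this
    have h0 : aeval z h = 0 := by
      have : aeval z g * aeval z h = 0 := by rw [← map_mul, ← hh, minpoly.aeval]
      calc aeval z h = d * aeval z g * aeval z h := by rw [hd, one_mul]
        _ = 0 := by rw [mul_assoc, this, mul_zero]
    obtain ⟨k, hk⟩ := minpoly.dvd K z h0
    have hh0 : h ≠ 0 := by rintro rfl; exact hm0 (by simpa using hh)
    apply hg.not_isUnit
    refine IsUnit.of_mul_eq_one k ?_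
    rw [hh] at hk
    have : h * (g * k) = h * 1 := by rw [mul_one]; conv_rhs => rw [hk]
                                     ring
    exact mul_left_cancel₀ hh0 this
  obtain ⟨M, hM, hle⟩ := Ideal.exists_le_maximal _ hne
  have hsimple : IsSimpleModule D (D ⧸ M) := isSimpleModule_iff_isCoatom.2 hM.out
  let f : (D ⧸ M) →ₗ[D] (D ⧸ M) :=
    { toFun := fun s => z • s
      map_add' := fun a b => smul_add _ _ _
      map_smul' := fun d s => by
        simp only [RingHom.id_apply]
        rw [smul_smul, smul_smul, hz] }
  obtain ⟨k, hk⟩ := hs (D ⧸ M) hsimple f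
  have hk1 : z - algebraMap K D k ∈ M := by
    have := hk (Submodule.Quotient.mk 1)
    change z • (Submodule.Quotient.mk 1 : D ⧸ M) = _ at this
    rw [← Submodule.Quotient.mk_smul, ← Submodule.Quotient.mk_smul, Submodule.Quotient.eq] at this
    simpa using this
  have hroot : g.eval k = 0 := by
    by_contra hcon
    have h1 : algebraMap K D (g.eval k) ∈ M := by
      obtain ⟨q, hq⟩ := X_sub_C_dvd_sub_C_eval (a := k) (p := g)
      have h2 := congrArg (aeval z) hq
      rw [mul_comm] at h2
      simp only [map_sub, map_mul, aeval_X, aeval_C] at h2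
      have h3 : algebraMap K D (g.eval k) = aeval z g - aeval z q * (z - algebraMap K D k) := by
        rw [← h2]; abel
      rw [h3]
      exact sub_mem (hle (Ideal.subset_span rfl)) (M.mul_mem_left _ hk1)
    apply hM.ne_top
    rw [Ideal.eq_top_iff_one]
    have := M.mul_mem_left (algebraMap K D (g.eval k)⁻¹) h1
    rwa [← map_mul, inv_mul_cancel₀ hcon, map_one] at this
  exact degree_eq_one_of_irreducible_of_root hg hroot

lemma exists_roots {L : Type*} {K : Type u} {B : Type*} {D : Type v} [CommRing L] [IsDomain L] [IsIntegrallyClosed L]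
    [Field K] [Algebra L K] [IsFractionRing L K] [Ring B] [Algebra L B] [Module.Finite L B]
    [Ring D] [Algebra K D] [Module.Finite K D] (hs : IsSplitAlgebra K D)
    (j : B →+* D) (hj : Function.Injective j)
    (hjl : ∀ l : L, j (algebraMap L B l) = algebraMap K D (algebraMap L K l))
    (z : B) (hz : ∀ x, j z * x = x * j z) :
    ∃ s : Multiset L, aeval z (s.map fun a => X - C a).prod = 0 := by
  have hsp := splits_of_split hs (j z) hz
  have hev : ∀ F : L[X], j (aeval z F) = aeval (j z) (F.map (algebraMap L K)) := by
    intro F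
    rw [aeval_def, hom_eval₂, aeval_def, eval₂_map]
    congr 1
    ext l
    exact hjl l
  have hint : IsIntegral L z := IsIntegral.of_finite L z
  have hmem : ∀ r ∈ (minpoly K (j z)).roots, ∃ l : L, algebraMap L K l = r := by
    intro r hr
    apply IsIntegrallyClosed.algebraMap_eq_of_integral
    obtain ⟨f, hf, hf0⟩ := hint
    refine ⟨f, hf, ?_⟩
    have h1 : minpoly K (j z) ∣ f.map (algebraMap L K) := by
      apply minpoly.dvd
      rw [← hev]
      rw [aeval_def, hf0, map_zero]
    have h2 := (mem_roots'.1 hr).2.dvd h1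
    rwa [IsRoot, eval_map] at h2
  choose! φ hφ using hmem
  refine ⟨(minpoly K (j z)).roots.map φ, ?_⟩
  apply hj
  rw [hev, map_zero]
  have : (((minpoly K (j z)).roots.map φ).map fun a => X - C a).prod.map (algebraMap L K) = minpoly K (j z) := by
    conv_rhs => rw [hsp.eq_prod_roots_of_monic (minpoly.monic (IsIntegral.of_finite K _))]
    rw [Polynomial.map_multiset_prod, Multiset.map_map, Multiset.map_map]
    congr 1
    apply Multiset.map_congr rfl
    intro r hr
    simp [hφ r hr]
  rw [this, minpoly.aeval]

lemma coprime_multiset {R : Type*} [CommRing R] {ι : Type*} (s : Multiset ι) (f : ι → R) (q : R)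
    (h : ∀ a ∈ s, IsCoprime (f a) q) : IsCoprime (s.map f).prod q := by
  induction s using Multiset.induction with
  | empty => simpa using isCoprime_one_left
  | cons a s ih =>
    rw [Multiset.map_cons, Multiset.prod_cons]
    exact (h a (Multiset.mem_cons_self a s)).mul_left (ih fun b hb => h b (Multiset.mem_cons_of_mem hb))

lemma exists_idem_of_roots {L B C' : Type*} [CommRing L] [IsLocalRing L] [Ring B] [Algebra L B] [Ring C']
    (π : B →+* C') (z : B) (s : Multiset L) (hs : aeval z (s.map fun a => X - C a).prod = 0)
    (hz : IsIdempotentElem (π z)) :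
    ∃ q : L[X], IsIdempotentElem (aeval z q) ∧ π (aeval z q) = π z := by
  classical
  let m := IsLocalRing.maximalIdeal L
  set s1 := s.filter (· ∈ m) with hs1
  set s2 := s.filter (· ∉ m) with hs2
  let F : Multiset L → L[X] := fun t => (t.map fun a => X - C a).prod
  have hco : IsCoprime (F (0 ::ₘ s1)) (F (1 ::ₘ s2)) := by
    have hu : ∀ a ∈ (0 ::ₘ s1), ∀ b ∈ (1 ::ₘ s2), IsUnit (b - a) := by
      intro a ha b hb
      have ha' : a ∈ m := by
        rcases Multiset.mem_cons.1 ha with rfl | h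
        · exact m.zero_mem
        · exact (Multiset.mem_filter.1 h).2
      have hb' : b ∉ m := by
        rcases Multiset.mem_cons.1 hb with rfl | h
        · exact fun h => (IsLocalRing.mem_maximalIdeal _).1 h isUnit_one
        · exact (Multiset.mem_filter.1 h).2
      by_contra hcon
      exact hb' ((Submodule.sub_mem_iff_left m ha').1 ((IsLocalRing.mem_maximalIdeal _).2 hcon))
    apply coprime_multiset
    intro a ha
    apply IsCoprime.symm
    apply coprime_multiset
    intro b hb
    exact isCoprime_X_sub_C_of_isUnit_sub (hu a ha b hb)
  obtain ⟨u, v, huv⟩ := hco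
  let φ : L[X] →+* C' := π.comp (aeval z).toRingHom
  have hFz : aeval z (F s1 * F s2) = 0 := by
    have : F s1 * F s2 = F s := by
      change (s1.map _).prod * (s2.map _).prod = _
      rw [← Multiset.prod_add, ← Multiset.map_add, hs1, hs2, Multiset.filter_add_not]
    rw [this]; exact hs
  have h0 : F (0 ::ₘ s1) = X * F s1 := by simp [F]
  have h1 : F (1 ::ₘ s2) = (X - 1) * F s2 := by simp [F]
  rw [h0, h1] at huv
  have hφ : φ X * φ X = φ X := by
    change π (aeval z X) * π (aeval z X) = π (aeval z X)
    rw [aeval_X]; exact hz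
  refine ⟨u * (X * F s1), ?_, ?_⟩
  · have : u * (X * F s1) * (u * (X * F s1)) = u * (X * F s1) - u * v * X * (X - 1) * (F s1 * F s2) := by
      linear_combination (u * (X * F s1)) * huv
    unfold IsIdempotentElem
    rw [← map_mul, this, map_sub, map_mul _ _ (F s1 * F s2), hFz, mul_zero, sub_zero]
  · change φ _ = _
    have e0 : φ X = π z := by
      change π (aeval z X) = π z
      rw [aeval_X]
    rw [← e0]
    have e1 : φ (u * (X * F s1)) * (1 - φ X) = 0 := by
      have : u * (X * F s1) = u * F s1 * X := by ring
      rw [this, map_mul, mul_assoc, mul_sub, hφ, mul_one, sub_self, mul_zero]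
    have e2 : φ (v * ((X - 1) * F s2)) * φ X = 0 := by
      have : v * ((X - 1) * F s2) = v * F s2 * (X - 1) := by ring
      rw [this, map_mul, mul_assoc, map_sub, map_one, sub_mul, hφ, one_mul, sub_self, mul_zero]
    have e3 := congrArg φ huv
    rw [map_add, map_one] at e3
    rw [mul_sub, mul_one, sub_eq_zero] at e1
    rw [e1]
    rw [← eq_sub_iff_add_eq] at e3
    rw [e3, sub_mul, e2, one_mul, sub_zero]

theorem local_equiv {L : Type*} {K : Type u} {B : Type*} {D : Type v} {C' : Type*}
    [CommRing L] [IsDomain L] [IsIntegrallyClosed L] [IsLocalRing L] [IsNoetherianRing L]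
    [Field K] [Algebra L K] [IsFractionRing L K] [Ring B] [Algebra L B] [Module.Finite L B]
    [Ring D] [Algebra K D] [Module.Finite K D] (hs : IsSplitAlgebra K D) [Ring C']
    (π : B →+* C') (hπ : Function.Surjective π)
    (hker : ∀ x, π x = 0 ↔ x ∈ IB B (IsLocalRing.maximalIdeal L))
    (j : B →+* D) (hj : Function.Injective j)
    (hjl : ∀ l : L, j (algebraMap L B l) = algebraMap K D (algebraMap L K l))
    (hspan : Submodule.span K (Set.range j) = ⊤) :
    Nonempty (CI C' ≃ {e : D // e ∈ CI D ∧ e ∈ Set.range j}) := by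
  set m := IsLocalRing.maximalIdeal L
  have hcent : ∀ e : B, (∀ x, e * x = x * e) → ∀ x, j e * x = x * j e := by
    intro e he x
    have : x ∈ Submodule.span K (Set.range j) := hspan ▸ Submodule.mem_top
    induction this using Submodule.span_induction with
    | mem y hy => obtain ⟨b, rfl⟩ := hy; rw [← map_mul, he, map_mul]
    | zero => simp
    | add u v _ _ hu hv => rw [mul_add, add_mul, hu, hv]
    | smul c u _ hu => rw [mul_smul_comm, smul_mul_assoc, hu]
  let α : CI B → CI C' := fun e => ⟨π e.1, e.2.1.map π, fun x => by
    obtain ⟨y, rfl⟩ := hπ x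
    rw [← map_mul, e.2.2, map_mul]⟩
  let β : CI B → {e : D // e ∈ CI D ∧ e ∈ Set.range j} := fun e =>
    ⟨j e.1, ⟨e.2.1.map j, hcent _ e.2.2⟩, e.1, rfl⟩
  have hβ : Function.Bijective β := by
    constructor
    · intro a b h
      exact Subtype.ext (hj (congrArg Subtype.val h))
    · rintro ⟨_, ⟨h1, h2⟩, e, rfl⟩
      refine ⟨⟨e, hj ?_, fun x => hj ?_⟩, rfl⟩
      · rw [map_mul]; exact h1
      · rw [map_mul, map_mul, h2]
  have hα : Function.Bijective α := by
    constructor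
    · intro a b h
      have h1 : π a.1 = π b.1 := congrArg Subtype.val h
      have h2 : a.1 - b.1 ∈ IB B m := by rw [← hker, map_sub, h1, sub_self]
      have h3 : (a.1 - b.1) * ((a.1 - b.1) * (a.1 - b.1)) = a.1 - b.1 := by
        have ha : a.1 * a.1 = a.1 := a.2.1
        have hb : b.1 * b.1 = b.1 := b.2.1
        have hab := a.2.2 b.1
        have e1 : (a.1 - b.1) * (a.1 - b.1) = a.1 - 2 * (a.1 * b.1) + b.1 := by
          rw [mul_sub, sub_mul, sub_mul, ha, hb, ← hab]; noncomm_ring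
        have e2 : a.1 * (a.1 * b.1) = a.1 * b.1 := by rw [← mul_assoc, ha]
        have e3 : b.1 * (a.1 * b.1) = a.1 * b.1 := by rw [hab, ← mul_assoc, hb]
        rw [e1]
        have : (a.1 - b.1) * (a.1 - 2 * (a.1 * b.1) + b.1) = a.1 * a.1 - 2 * (a.1 * (a.1 * b.1)) + a.1 * b.1
           - b.1 * a.1 + 2 * (b.1 * (a.1 * b.1)) - b.1 * b.1 := by noncomm_ring
        rw [this, e2, e3, ha, hb, ← hab]; abel
      have h4 : ∀ k : ℕ, a.1 - b.1 ∈ IB B (m ^ k) := by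
        intro k
        induction k with
        | zero => simp
        | succ k ih =>
          rw [← h3, pow_succ]
          exact IB_mul ih (IB_mul_left _ h2)
      have h5 := Ideal.iInf_pow_smul_eq_bot_of_isLocalRing (M := B) m (Ideal.IsPrime.ne_top inferInstance)
      have h6 : a.1 - b.1 ∈ (⨅ i : ℕ, m ^ i • ⊤ : Submodule L B) := by
        rw [Submodule.mem_iInf]; exact h4
      rw [h5, Submodule.mem_bot, sub_eq_zero] at h6
      exact Subtype.ext h6
    · rintro ⟨c, hc1, hc2⟩
      obtain ⟨x, rfl⟩ := hπ c
      obtain ⟨z, hzx, hzc⟩ := exists_central_lift m x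
        (by rw [← hker, map_sub, map_mul, hc1.eq, sub_self])
        (fun y => by rw [← hker, map_sub, map_mul, map_mul, hc2, sub_self])
      have hz : π z = π x := by
        rw [← hker, map_sub, sub_eq_zero] at hzx; exact hzx
      obtain ⟨s, hsr⟩ := exists_roots hs j hj hjl z (hcent z hzc)
      obtain ⟨q, hq1, hq2⟩ := exists_idem_of_roots π z s hsr (by rw [hz]; exact hc1)
      refine ⟨⟨aeval z q, hq1, fun x => ?_⟩, Subtype.ext (hq2.trans hz)⟩
      have : aeval z q ∈ Subalgebra.center L B := by
        have h1 := aeval_mem_adjoin_singleton (R := L) z (p := q)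
        have h2 : Algebra.adjoin L {z} ≤ Subalgebra.center L B := by
          rw [Algebra.adjoin_le_iff, Set.singleton_subset_iff]
          exact Subalgebra.mem_center_iff.2 fun y => (hzc y).symm
        exact h2 h1
      exact (Subalgebra.mem_center_iff.1 this x).symm
  exact ⟨(Equiv.ofBijective α hα).symm.trans (Equiv.ofBijective β hβ)⟩

end part3

section part4

lemma principal_of_colon {L : Type*} [CommRing L] [IsDomain L] [IsIntegrallyClosed L] [IsLocalRing L]
    [IsNoetherianRing L] (a b : L) (ha₂ : a ≠ 0) (hab : ¬ a ∣ b) (n : ℕ)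
    (hn : ∀ t ∈ IsLocalRing.maximalIdeal L ^ n, a ∣ t * b) :
    (IsLocalRing.maximalIdeal L).IsPrincipal := by
  classical
  set m := IsLocalRing.maximalIdeal L
  obtain ⟨b, hb₂, hb₃⟩ : ∃ b', ¬ a ∣ b' ∧ ∀ t ∈ m, ∃ k : L, k * a = b' * t := by
    induction n with
    | zero => exact absurd (by simpa using hn 1 (by simp)) hab
    | succ n ih =>
      by_cases h : ∀ t ∈ m ^ n, a ∣ t * b
      · exact ih h
      · push Not at h
        obtain ⟨t, ht, hta⟩ := h
        refine ⟨t * b, hta, fun s hs => ?_⟩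
        obtain ⟨k, hk⟩ := hn (t * s) (by rw [pow_succ]; exact Ideal.mul_mem_mul ht hs)
        exact ⟨k, by rw [mul_comm, ← hk]; ring⟩
  have ha₁ : a ∈ m := by
    rw [IsLocalRing.mem_maximalIdeal]
    exact fun h => hb₂ (h.dvd)
  have hb₄ : b ≠ 0 := by rintro rfl; apply hb₂; exact dvd_zero _
  let K := FractionRing L
  let x : K := algebraMap L K b / algebraMap L K a
  let M := Submodule.map (Algebra.linearMap L K) m
  have ha₃ : algebraMap L K a ≠ 0 := IsFractionRing.to_map_eq_zero_iff.not.mpr ha₂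
  by_cases hx : ∀ y ∈ M, x * y ∈ M
  · have := isIntegral_of_smul_mem_submodule M ?_ ?_ x hx
    · obtain ⟨y, e⟩ := IsIntegrallyClosed.algebraMap_eq_of_integral this
      refine (hb₂ ⟨y, ?_⟩).elim
      apply IsFractionRing.injective L K
      rw [map_mul, e, mul_div_cancel₀ _ ha₃]
    · rw [Submodule.ne_bot_iff]; refine ⟨_, ⟨a, ha₁, rfl⟩, ?_⟩
      exact (IsFractionRing.to_map_eq_zero_iff (K := K)).not.mpr ha₂
    · apply Submodule.FG.map; exact IsNoetherian.noetherian _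
  · have :
        (M.map (DistribSMul.toLinearMap L K x)).comap (Algebra.linearMap L K) = ⊤ := by
      contrapose! hx with h
      rintro m' ⟨m, hm, rfl : algebraMap L K m = m'⟩
      obtain ⟨k, hk⟩ := hb₃ m hm
      have hk' : x * algebraMap L K m = algebraMap L K k := by
        rw [← mul_div_right_comm, ← map_mul, ← hk, map_mul, mul_div_cancel_right₀ _ ha₃]
      exact ⟨k, IsLocalRing.le_maximalIdeal h ⟨_, ⟨_, hm, rfl⟩, hk'⟩, hk'.symm⟩
    obtain ⟨y, hy₁, hy₂⟩ : ∃ y ∈ m, b * y = a := by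
      rw [Ideal.eq_top_iff_one, Submodule.mem_comap] at this
      obtain ⟨_, ⟨y, hy, rfl⟩, hy' : x * algebraMap L K y = algebraMap L K 1⟩ := this
      rw [map_one, ← mul_div_right_comm, div_eq_one_iff_eq ha₃, ← map_mul] at hy'
      exact ⟨y, hy, IsFractionRing.injective L K hy'⟩
    refine ⟨⟨y, ?_⟩⟩
    apply le_antisymm
    · intro m hm; obtain ⟨k, hk⟩ := hb₃ m hm; rw [← hy₂, mul_comm, mul_assoc] at hk
      rw [← mul_left_cancel₀ hb₄ hk, mul_comm]; exact Ideal.mem_span_singleton'.mpr ⟨_, rfl⟩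
    · rwa [Submodule.span_le, Set.singleton_subset_iff]

/-- denominator ideal of `x : K` -/
noncomputable def denK {R K : Type*} [CommRing R] [CommRing K] [Algebra R K] (x : K) : Ideal R :=
  Submodule.comap (LinearMap.toSpanSingleton R K x) (LinearMap.range (Algebra.linearMap R K))

lemma mem_denK {R K : Type*} [CommRing R] [CommRing K] [Algebra R K] (x : K) (r : R) :
    r ∈ denK x ↔ ∃ s, algebraMap R K s = r • x := Iff.rfl

lemma height_denK {R K : Type*} [CommRing R] [IsDomain R] [IsNoetherianRing R] [IsIntegrallyClosed R]
    [Field K] [Algebra R K] [IsFractionRing R K] (x : K) (q : Ideal R)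
    (hq : q ∈ (denK x : Ideal R).minimalPrimes) : q.height = 1 := by
  have hqp : q.IsPrime := hq.1.1
  obtain ⟨b, a, ha, rfl⟩ := IsFractionRing.div_surjective (A := R) x
  have ha0 : a ≠ 0 := nonZeroDivisors.ne_zero ha
  have haK : algebraMap R K a ≠ 0 := IsFractionRing.to_map_eq_zero_iff.not.mpr ha0
  have hmem : ∀ r, r ∈ (denK (algebraMap R K b / algebraMap R K a) : Ideal R) ↔ a ∣ r * b := by
    intro r
    rw [mem_denK]
    refine exists_congr fun s => ?_
    rw [Algebra.smul_def, mul_div, eq_div_iff haK, ← map_mul, ← map_mul,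
      (IsFractionRing.injective R K).eq_iff, mul_comm s, eq_comm]
  apply le_antisymm
  · let L := Localization.AtPrime q
    have : IsDomain L := IsLocalization.isDomain_localization q.primeCompl_le_nonZeroDivisors
    have : IsIntegrallyClosed L := isIntegrallyClosed_of_isLocalization L q.primeCompl q.primeCompl_le_nonZeroDivisors
    have : IsNoetherianRing L := IsLocalization.isNoetherianRing q.primeCompl L inferInstance
    have hinj : Function.Injective (algebraMap R L) := IsLocalization.injective L q.primeCompl_le_nonZeroDivisors
    have hrad := IsLocalization.AtPrime.radical_map_of_mem_minimalPrimes L q _ hq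
    obtain ⟨n, hn⟩ := Ideal.exists_radical_pow_le_of_fg
      ((denK (algebraMap R K b / algebraMap R K a) : Ideal R).map (algebraMap R L)) (IsNoetherian.noetherian _)
    rw [hrad] at hn
    have hprin : (IsLocalRing.maximalIdeal L).IsPrincipal := by
      refine principal_of_colon (algebraMap R L a) (algebraMap R L b) ?_ ?_ n ?_
      · rwa [Ne, map_eq_zero_iff _ hinj]
      · rintro ⟨l, hl⟩
        obtain ⟨c, s, rfl⟩ := IsLocalization.exists_mk'_eq q.primeCompl l
        apply s.2
        apply hq.1.2
        rw [hmem]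
        refine ⟨c, hinj ?_⟩
        rw [map_mul, map_mul, hl, ← IsLocalization.mk'_spec L c s]; ring
      · intro t ht
        have ht2 := hn (by simpa [IsLocalization.AtPrime.map_eq_maximalIdeal] using ht)
        have : (denK (algebraMap R K b / algebraMap R K a) : Ideal R).map (algebraMap R L) ≤
           Submodule.comap (LinearMap.toSpanSingleton L L (algebraMap R L b)) (Ideal.span {algebraMap R L a}) := by
          rw [Ideal.map_le_iff_le_comap]
          intro r hr
          rw [hmem] at hr
          rw [Ideal.mem_comap, Submodule.mem_comap, LinearMap.toSpanSingleton_apply, Ideal.mem_span_singleton,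
            smul_eq_mul, ← map_mul]
          exact map_dvd _ hr
        have := this ht2
        rwa [Submodule.mem_comap, LinearMap.toSpanSingleton_apply, Ideal.mem_span_singleton, smul_eq_mul] at this
    have h1 := Ideal.height_le_one_of_isPrincipal_of_mem_minimalPrimes (IsLocalRing.maximalIdeal L)
      (IsLocalRing.maximalIdeal L) (by rw [Ideal.minimalPrimes_eq_subsingleton_self]; rfl)
    rwa [← IsLocalization.height_under q.primeCompl, Localization.AtPrime.under_maximalIdeal] at h1
  · rw [Order.one_le_iff_ne_zero]
    intro h0
    rw [Ideal.height_eq_zero_iff_eq_bot] at h0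
    have haq : a ∈ q := hq.1.2 ((hmem a).2 (dvd_mul_right _ _))
    rw [h0] at haq
    exact ha0 haq

variable {R A : Type u} [CommRing R] [IsDomain R] [Ring A] [Algebra R A]

/-- denominator ideal of an element of `K ⊗ A` -/
noncomputable def denT (K : Type*) [Field K] [Algebra R K] (e : K ⊗[R] A) : Ideal R :=
  Submodule.comap (LinearMap.toSpanSingleton R (K ⊗[R] A) e) (LinearMap.range (TensorProduct.mk R K A 1))

lemma mem_denT (K : Type*) [Field K] [Algebra R K] (e : K ⊗[R] A) (r : R) :
    r ∈ denT K e ↔ ∃ a : A, 1 ⊗ₜ[R] a = r • e := Iff.rfl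

lemma height_denT (K : Type*) [Field K] [Algebra R K] [IsFractionRing R K] [IsNoetherianRing R] [IsIntegrallyClosed R]
    [Module.Finite R A] [Module.Flat R A]
    (e : K ⊗[R] A) (q : Ideal R) (hq : q ∈ (denT K e).minimalPrimes) : q.height = 1 := by
  have : Module.FinitePresentation R A := Module.finitePresentation_of_finite R A
  have : Module.Projective R A := Module.Flat.projective_of_finitePresentation
  obtain ⟨n, f, g, -, -, hfg⟩ := Module.Finite.exists_comp_eq_id_of_projective R A
  let G : Fin n → (K ⊗[R] A →ₗ[R] K) := fun i =>
    (TensorProduct.rid R K).toLinearMap ∘ₗ LinearMap.lTensor K (LinearMap.proj i ∘ₗ g)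
  have hG : ∀ i k a, G i (k ⊗ₜ a) = (g a i) • k := fun i k a => by simp [G]
  let a : Fin n → A := fun i => f fun j => if i = j then 1 else 0
  have hga : ∀ y : A, ∑ i, g y i • a i = y := by
    intro y
    conv_rhs => rw [← LinearMap.id_apply (R := R) y, ← hfg, LinearMap.comp_apply, LinearMap.pi_apply_eq_sum_univ f]
  have hsum : ∀ e : K ⊗[R] A, ∑ i, (G i e) ⊗ₜ a i = e := by
    intro e
    induction e with
    | zero => simp
    | add x y hx hy => simp only [map_add, TensorProduct.add_tmul, Finset.sum_add_distrib, hx, hy]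
    | tmul k y =>
      simp only [hG, TensorProduct.smul_tmul]
      rw [← TensorProduct.tmul_sum, hga]
  have hle : ∀ i, denT K e ≤ denK (G i e) := by
    intro i r hr
    obtain ⟨y, hy⟩ := (mem_denT K e r).1 hr
    rw [mem_denK]
    refine ⟨g y i, ?_⟩
    rw [← map_smul, ← hy, hG, Algebra.smul_def, mul_one]
  have hge : (Finset.univ.inf fun i => (denK (G i e) : Ideal R)) ≤ q := by
    refine le_trans ?_ hq.1.2
    intro r hr
    simp only [Submodule.mem_finsetInf, Finset.mem_univ, true_imp_iff, mem_denK] at hr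
    choose s hs using hr
    refine (mem_denT K e r).2 ⟨∑ i, s i • a i, ?_⟩
    conv_rhs => rw [← hsum e, Finset.smul_sum]
    rw [TensorProduct.tmul_sum]
    refine Finset.sum_congr rfl fun i _ => ?_
    rw [TensorProduct.smul_tmul', ← hs, ← TensorProduct.smul_tmul, Algebra.smul_def, mul_one]
  obtain ⟨i, -, hi⟩ := (Ideal.IsPrime.inf_le' hq.1.1).1 hge
  refine height_denK (G i e) q ⟨⟨hq.1.1, hi⟩, fun p hp hpq => ?_⟩
  exact hq.2 ⟨hp.1, (hle i).trans hp.2⟩ hpq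

end part4

section part5
variable {R A : Type u} [CommRing R] [IsDomain R] [Ring A] [Algebra R A]

/-- the map `A_p → A^K` -/
noncomputable def jmap (A : Type u) [Ring A] [Algebra R A] (p : PrimeSpectrum R) :
    Localization.AtPrime p.asIdeal ⊗[R] A →ₐ[R] FractionRing R ⊗[R] A :=
  Algebra.TensorProduct.map (IsScalarTower.toAlgHom R (Localization.AtPrime p.asIdeal) (FractionRing R)) (AlgHom.id R A)

noncomputable def pmap (A : Type u) [Ring A] [Algebra R A] (p : PrimeSpectrum R) :
    Localization.AtPrime p.asIdeal ⊗[R] A →ₐ[R] resFieldAt R p ⊗[R] A :=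
  Algebra.TensorProduct.map (IsScalarTower.toAlgHom R (Localization.AtPrime p.asIdeal) (resFieldAt R p)) (AlgHom.id R A)

lemma jmap_tmul (p : PrimeSpectrum R) (l : Localization.AtPrime p.asIdeal) (a : A) :
    jmap A p (l ⊗ₜ a) = algebraMap _ (FractionRing R) l ⊗ₜ a := rfl

lemma pmap_tmul (p : PrimeSpectrum R) (l : Localization.AtPrime p.asIdeal) (a : A) :
    pmap A p (l ⊗ₜ a) = algebraMap _ (resFieldAt R p) l ⊗ₜ a := rfl

lemma mem_range_jmap (p : PrimeSpectrum R) (e : FractionRing R ⊗[R] A) :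
    e ∈ Set.range (jmap A p) ↔ ¬ denT (FractionRing R) e ≤ p.asIdeal := by
  constructor
  · rintro ⟨b, rfl⟩
    suffices h : ∃ s ∈ p.asIdeal.primeCompl, ∃ a : A, s • b = 1 ⊗ₜ a by
      obtain ⟨s, hs, a, hsa⟩ := h
      intro hle
      refine hs (hle ((mem_denT _ _ _).2 ⟨a, ?_⟩))
      rw [← map_smul, hsa, jmap_tmul, map_one]
    induction b with
    | zero => exact ⟨1, one_mem _, 0, by simp⟩
    | add x y hx hy =>
      obtain ⟨s, hs, a, ha⟩ := hx
      obtain ⟨t, ht, b, hb⟩ := hy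
      refine ⟨t * s, mul_mem ht hs, t • a + s • b, ?_⟩
      rw [smul_add, mul_smul, ha, mul_comm, mul_smul, hb, TensorProduct.tmul_add,
        TensorProduct.tmul_smul, TensorProduct.tmul_smul]
    | tmul l a =>
      obtain ⟨c, s, rfl⟩ := IsLocalization.exists_mk'_eq p.asIdeal.primeCompl l
      refine ⟨s, s.2, c • a, ?_⟩
      rw [TensorProduct.smul_tmul', ← TensorProduct.smul_tmul, Algebra.smul_def, Algebra.smul_def, mul_one,
        mul_comm, IsLocalization.mk'_spec]
  · intro h
    rw [SetLike.not_le_iff_exists] at h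
    obtain ⟨s, hs, hsp⟩ := h
    obtain ⟨a, ha⟩ := (mem_denT _ _ _).1 hs
    have hs0 : algebraMap R (FractionRing R) s ≠ 0 := by
      rw [Ne, map_eq_zero_iff _ (IsFractionRing.injective R (FractionRing R))]
      rintro rfl
      exact hsp (zero_mem _)
    refine ⟨IsLocalization.mk' _ (1 : R) (⟨s, hsp⟩ : p.asIdeal.primeCompl) ⊗ₜ a, ?_⟩
    have : s • jmap A p (IsLocalization.mk' _ (1 : R) (⟨s, hsp⟩ : p.asIdeal.primeCompl) ⊗ₜ a) = s • e := by
      rw [← map_smul, TensorProduct.smul_tmul', Algebra.smul_def, mul_comm]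
      have := IsLocalization.mk'_spec (Localization.AtPrime p.asIdeal) (1 : R) (⟨s, hsp⟩ : p.asIdeal.primeCompl)
      dsimp only at this
      rw [this, map_one, jmap_tmul, map_one, ha]
    rw [algebra_compatible_smul (FractionRing R) s, algebra_compatible_smul (FractionRing R) s e] at this
    exact smul_right_injective _ hs0 this

lemma pmap_ker (p : PrimeSpectrum R) (x : Localization.AtPrime p.asIdeal ⊗[R] A) :
    pmap A p x = 0 ↔ x ∈ IB _ (IsLocalRing.maximalIdeal (Localization.AtPrime p.asIdeal)) := by
  set L := Localization.AtPrime p.asIdeal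
  set m := IsLocalRing.maximalIdeal L
  constructor
  · intro h
    let i : (m.restrictScalars R) →ₗ[R] L := (m.restrictScalars R).subtype
    let r : L →ₗ[R] resFieldAt R p := (IsScalarTower.toAlgHom R L (resFieldAt R p)).toLinearMap
    have hex : Function.Exact i r := by
      intro l
      change IsLocalRing.residue L l = 0 ↔ _
      rw [IsLocalRing.residue_eq_zero_iff]
      constructor
      · intro hl; exact ⟨⟨l, hl⟩, rfl⟩
      · rintro ⟨l, rfl⟩; exact l.2
    have hs : Function.Surjective r := IsLocalRing.residue_surjective
    have := rTensor_exact A hex hs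
    obtain ⟨y, rfl⟩ := (this x).1 h
    induction y with
    | zero => simp
    | add a b ha hb =>
      rw [map_add]
      refine add_mem (ha ?_) (hb ?_) <;>
      exact (this _).2 ⟨_, rfl⟩
    | tmul l a =>
      have : LinearMap.rTensor A i (l ⊗ₜ a) = (l : L) • ((1 : L) ⊗ₜ[R] a) := by
        rw [TensorProduct.smul_tmul', smul_eq_mul, mul_one]; rfl
      rw [this]
      exact Submodule.smul_mem_smul l.2 Submodule.mem_top
  · intro h
    induction h using Submodule.smul_induction_on' with
    | smul r hr n hn =>
      rw [Algebra.smul_def, map_mul]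
      have : pmap A p (algebraMap L (L ⊗[R] A) r) = 0 := by
        rw [Algebra.TensorProduct.algebraMap_apply, pmap_tmul]
        have : algebraMap L (resFieldAt R p) r = 0 := (IsLocalRing.residue_eq_zero_iff r).2 hr
        change (algebraMap L (resFieldAt R p) r) ⊗ₜ _ = _
        rw [this, TensorProduct.zero_tmul]
      rw [this, zero_mul]
    | add x _ y _ hx hy => rw [map_add, hx, hy, add_zero]

theorem fiber_equiv [IsNoetherianRing R] [IsIntegrallyClosed R] [Module.Finite R A] [Module.Flat R A]
    (hsplit : IsSplitAlgebra (FractionRing R) (FractionRing R ⊗[R] A)) (p : PrimeSpectrum R) :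
    Nonempty (CI (resFieldAt R p ⊗[R] A) ≃
      {e : FractionRing R ⊗[R] A // e ∈ CI (FractionRing R ⊗[R] A) ∧ ¬ denT (FractionRing R) e ≤ p.asIdeal}) := by
  let L := Localization.AtPrime p.asIdeal
  have : IsDomain L := IsLocalization.isDomain_localization p.asIdeal.primeCompl_le_nonZeroDivisors
  have : IsIntegrallyClosed L :=
    isIntegrallyClosed_of_isLocalization L p.asIdeal.primeCompl p.asIdeal.primeCompl_le_nonZeroDivisors
  have : IsNoetherianRing L := IsLocalization.isNoetherianRing p.asIdeal.primeCompl L inferInstance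
  simp only [← mem_range_jmap]
  refine local_equiv (L := L) (B := L ⊗[R] A) hsplit (pmap A p).toRingHom ?_ (pmap_ker p) (jmap A p).toRingHom ?_ ?_ ?_
  · exact LinearMap.rTensor_surjective A (g := (IsScalarTower.toAlgHom R L (resFieldAt R p)).toLinearMap)
      IsLocalRing.residue_surjective
  · exact Module.Flat.rTensor_preserves_injective_linearMap (M := A)
      (IsScalarTower.toAlgHom R L (FractionRing R)).toLinearMap (IsFractionRing.injective L (FractionRing R))
  · intro l
    rfl
  · rw [eq_top_iff]
    rintro x -
    induction x with
    | zero => exact zero_mem _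
    | add x y hx hy => exact add_mem hx hy
    | tmul k a =>
      have : k ⊗ₜ[R] a = k • jmap A p (1 ⊗ₜ a) := by
        rw [jmap_tmul, map_one, TensorProduct.smul_tmul', smul_eq_mul, mul_one]
      rw [this]
      exact Submodule.smul_mem _ _ (Submodule.subset_span ⟨_, rfl⟩)

end part5

section part6
variable {R A : Type u} [CommRing R] [IsDomain R] [Ring A] [Algebra R A]

lemma denT_not_le_bot (e : FractionRing R ⊗[R] A) :
    ¬ denT (FractionRing R) e ≤ (⊥ : PrimeSpectrum R).asIdeal := by
  rw [← mem_range_jmap]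
  refine LinearMap.rTensor_surjective A (g := (IsScalarTower.toAlgHom R
    (Localization.AtPrime (⊥ : PrimeSpectrum R).asIdeal) (FractionRing R)).toLinearMap) ?_ e
  intro k
  obtain ⟨b, a, ha, rfl⟩ := IsFractionRing.div_surjective (A := R) k
  have ha0 : a ≠ 0 := nonZeroDivisors.ne_zero ha
  have haK : algebraMap R (FractionRing R) a ≠ 0 := IsFractionRing.to_map_eq_zero_iff.not.mpr ha0
  have ha' : a ∈ (⊥ : PrimeSpectrum R).asIdeal.primeCompl := fun h => ha0 h
  refine ⟨IsLocalization.mk' _ b ⟨a, ha'⟩, ?_⟩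
  change algebraMap (Localization.AtPrime (⊥ : PrimeSpectrum R).asIdeal) (FractionRing R) _ = _
  rw [eq_div_iff haK, IsScalarTower.algebraMap_apply R (Localization.AtPrime (⊥ : PrimeSpectrum R).asIdeal)
    (FractionRing R) a, ← map_mul]
  have := IsLocalization.mk'_spec (Localization.AtPrime (⊥ : PrimeSpectrum R).asIdeal) b ⟨a, ha'⟩
  dsimp only at this
  rw [this, ← IsScalarTower.algebraMap_apply]

lemma irredComp_aux [IsNoetherianRing R] (ι : Type*) (E : Set ι) (hE : E.Finite) (I : ι → Ideal R)
    (hI : ∀ e ∈ E, ∀ q ∈ (I e).minimalPrimes, q.height = 1)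
    (s : Set (PrimeSpectrum R)) (hs : ∀ p, p ∈ s ↔ ∃ e ∈ E, I e ≤ p.asIdeal) :
    IsClosed s ∧ IsReducedWeilDivisor s := by
  have hcl : IsClosed s := by
    have : s = ⋃ e ∈ E, PrimeSpectrum.zeroLocus (I e : Set R) := by
      ext p
      simp [hs, PrimeSpectrum.mem_zeroLocus]
    rw [this]
    exact hE.isClosed_biUnion fun e _ => PrimeSpectrum.isClosed_zeroLocus _
  refine ⟨hcl, ?_⟩
  have key : ∀ C, IsIrredCompOf C s → ∃ q : PrimeSpectrum R, C = closure {q} ∧ ∃ e ∈ E,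
      q.asIdeal ∈ (I e).minimalPrimes := by
    rintro C ⟨h1, h2, h3⟩
    have hC : closure C = C := h3 _ h1.closure (closure_minimal h2 hcl) subset_closure
    have hg := h1.isGenericPoint_genericPoint_closure
    set q := h1.genericPoint
    have hq : closure {q} = C := hg.def.trans hC
    have hqC : q ∈ C := hq ▸ subset_closure rfl
    obtain ⟨e, he, hle⟩ := (hs q).1 (h2 hqC)
    refine ⟨q, hq.symm, e, he, ⟨q.2, hle⟩, ?_⟩
    rintro p' ⟨hp', hle'⟩ hpq
    have h4 := h3 (closure {(⟨p', hp'⟩ : PrimeSpectrum R)}) isIrreducible_singleton.closure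
      (closure_minimal (Set.singleton_subset_iff.2 ((hs _).2 ⟨e, he, hle'⟩)) hcl)
      (by
        rw [← hq]
        refine closure_minimal (Set.singleton_subset_iff.2 ?_) isClosed_closure
        rw [← specializes_iff_mem_closure, ← PrimeSpectrum.le_iff_specializes]
        exact hpq)
    have h5 : (⟨p', hp'⟩ : PrimeSpectrum R) ∈ closure {q} := by
      rw [hq, ← h4]; exact subset_closure rfl
    rw [← specializes_iff_mem_closure, ← PrimeSpectrum.le_iff_specializes] at h5
    exact h5
  constructor
  · have hfin : (⋃ e ∈ E, (fun q : PrimeSpectrum R => closure {q}) ''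
        (PrimeSpectrum.asIdeal ⁻¹' (I e).minimalPrimes)).Finite := by
      refine hE.biUnion fun e _ => Set.Finite.image _ (Set.Finite.preimage ?_ ?_)
      · intro a _ b _ h; exact PrimeSpectrum.ext h
      · exact Ideal.finite_minimalPrimes_of_isNoetherianRing R _
    refine hfin.subset fun C hC => ?_
    obtain ⟨q, rfl, e, he, hq⟩ := key C hC
    exact Set.mem_biUnion he ⟨q, hq, rfl⟩
  · intro C hC
    obtain ⟨q, rfl, e, he, hq⟩ := key C hC
    exact ⟨q, closure_closure, by rw [← PrimeSpectrum.height_eq_orderHeight]; exact hI e he _ hq⟩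

end part6

/-- **Corollary `normal_split_corollary_details`.** -/
theorem stmt5 (R : Type u) [CommRing R] [IsDomain R] [IsNoetherianRing R] [IsIntegrallyClosed R]
    (A : Type u) [Ring A] [Algebra R A] [Module.Finite R A] [Module.Flat R A]
    (hsplit : IsSplitAlgebra (FractionRing R) (FractionRing R ⊗[R] A)) :
    LowerSemicontinuous (fun p : PrimeSpectrum R => numBlocks (resFieldAt R p ⊗[R] A)) ∧
    (∀ n : ℕ,
      IsLocallyClosed {p : PrimeSpectrum R | numBlocks (resFieldAt R p ⊗[R] A) = n} ∧
      closure {p : PrimeSpectrum R | numBlocks (resFieldAt R p ⊗[R] A) = n} ⊆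
        {p : PrimeSpectrum R | numBlocks (resFieldAt R p ⊗[R] A) ≤ n}) ∧
    (∀ p : PrimeSpectrum R,
      numBlocks (resFieldAt R p ⊗[R] A) ≤ numBlocks (FractionRing R ⊗[R] A)) ∧
    (∃ p : PrimeSpectrum R,
      numBlocks (resFieldAt R p ⊗[R] A) = numBlocks (FractionRing R ⊗[R] A)) ∧
    IsClosed {p : PrimeSpectrum R |
      numBlocks (resFieldAt R p ⊗[R] A) < numBlocks (FractionRing R ⊗[R] A)} ∧
    ({p : PrimeSpectrum R |
        numBlocks (resFieldAt R p ⊗[R] A) < numBlocks (FractionRing R ⊗[R] A)} = ∅ ∨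
      IsReducedWeilDivisor {p : PrimeSpectrum R |
        numBlocks (resFieldAt R p ⊗[R] A) < numBlocks (FractionRing R ⊗[R] A)}) := by
  have hfinE : Finite (CI (FractionRing R ⊗[R] A)) := finite_CI (FractionRing R)
  set E : Set (FractionRing R ⊗[R] A) := CI (FractionRing R ⊗[R] A) with hE
  have hEf : E.Finite := hfinE
  let S : PrimeSpectrum R → Set (FractionRing R ⊗[R] A) := fun p =>
    {e | e ∈ E ∧ ¬ denT (FractionRing R) e ≤ p.asIdeal}
  have hSE : ∀ p, S p ⊆ E := fun p e he => he.1
  have hSf : ∀ p, (S p).Finite := fun p => hEf.subset (hSE p)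
  have hD : E.ncard = 2 ^ numBlocks (FractionRing R ⊗[R] A) := card_CI hfinE
  set N : PrimeSpectrum R → ℕ := fun p => numBlocks (resFieldAt R p ⊗[R] A) with hN
  set ND := numBlocks (FractionRing R ⊗[R] A) with hND
  have hS : ∀ p, (S p).ncard = 2 ^ N p := by
    intro p
    obtain ⟨φ⟩ := fiber_equiv hsplit p
    have : Finite (S p) := hSf p
    have hf : Finite (CI (resFieldAt R p ⊗[R] A)) := Finite.of_equiv (S p) φ.symm
    rw [← card_CI hf, Nat.card_congr φ]
    rfl
  have hpow : ∀ a b : ℕ, 2 ^ a ≤ 2 ^ b ↔ a ≤ b := fun a b => Nat.pow_le_pow_iff_right (by norm_num)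
  have hmono : ∀ p q, S p ⊆ S q → N p ≤ N q := fun p q h => by
    rw [← hpow, ← hS, ← hS]
    exact Set.ncard_le_ncard h (hSf q)
  have hle : ∀ p, N p ≤ ND := fun p => by
    rw [← hpow, ← hS, ← hD]
    exact Set.ncard_le_ncard (hSE p) hEf
  have hlt : ∀ p, N p < ND ↔ ∃ e ∈ E, denT (FractionRing R) e ≤ p.asIdeal := by
    intro p
    constructor
    · intro h
      by_contra! hcon
      have : S p = E := Set.Subset.antisymm (hSE p) fun e he => ⟨he, hcon e he⟩
      have h2 := hS p
      rw [this, hD] at h2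
      exact h.ne' (Nat.pow_right_injective le_rfl h2)
    · rintro ⟨e, he, hep⟩
      have h1 : (S p).ncard < E.ncard :=
        Set.ncard_lt_ncard ⟨hSE p, fun h => (h he).2 hep⟩ hEf
      rw [hS, hD] at h1
      exact (Nat.pow_lt_pow_iff_right (by norm_num)).1 h1
  have hlsc : LowerSemicontinuous N := by
    intro p y hy
    have : ∀ᶠ q in nhds p, ∀ e ∈ S p, ¬ denT (FractionRing R) e ≤ q.asIdeal := by
      rw [Filter.eventually_all_finite (hSf p)]
      intro e he
      have ho : IsOpen (PrimeSpectrum.zeroLocus (denT (FractionRing R) e : Set R))ᶜ :=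
        (PrimeSpectrum.isClosed_zeroLocus _).isOpen_compl
      exact ho.mem_nhds he.2
    filter_upwards [this] with q hq
    exact lt_of_lt_of_le hy (hmono p q fun e he => ⟨he.1, hq e he⟩)
  have hcl : ∀ n, IsClosed {p | N p ≤ n} := fun n => hlsc.isClosed_preimage n
  have hfinal := irredComp_aux _ E hEf (fun e => denT (FractionRing R) e)
    (fun e _ q hq => height_denT _ e q hq) {p | N p < ND} hlt
  refine ⟨hlsc, fun n => ⟨?_, ?_⟩, hle, ⟨⊥, ?_⟩, hfinal.1, Or.inr hfinal.2⟩
  · have : {p | N p = n} = {p | n ≤ N p} ∩ {p | N p ≤ n} := by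
      ext p
      simp only [Set.mem_setOf_eq, Set.mem_inter_iff]
      omega
    change IsLocallyClosed {p | N p = n}
    rw [this]
    refine ⟨_, _, ?_, hcl n, rfl⟩
    rcases n with - | n
    · simp
    · exact hlsc.isOpen_preimage n
  · exact closure_minimal (fun p hp => le_of_eq hp) (hcl n)
  · refine le_antisymm (hle _) (not_lt.1 fun h => ?_)
    obtain ⟨e, -, he⟩ := (hlt _).1 h
    exact denT_not_le_bot e he
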